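/- Isomorphism of countable graphs (binary relations on ℕ) is analytic but not Borel: the relation R ⊆ M × M, where M = (ℕ × ℕ → Bool) and x R y iff there exists a bijection π : ℕ ≃ ℕ with x (π i, π j) = y (i, j) for all i, j ∈ ℕ, is an analytic subset of the Polish space M × M but is not a Borel subset of M × M. -/

import Mathlib

/-- Isomorphism of countable graphs (binary relations on `ℕ`), coded as points of
`(ℕ × ℕ) → Bool`. -/
def GraphIso (x y : (ℕ × ℕ) → Bool) : Prop :=
  ∃ π : ℕ ≃ ℕ, ∀ i j : ℕ, x (π i, π j) = y (i, j)

open MeasureTheory Filter Topology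

/-- The initial segment of length `n` of a sequence. -/
def initSeg {α : Type*} (x : ℕ → α) (n : ℕ) : List α := (List.range n).map x

@[simp]
theorem length_initSeg {α : Type*} (x : ℕ → α) (n : ℕ) : (initSeg x n).length = n := by
  simp [initSeg]

@[simp]
theorem dropLast_initSeg_succ {α : Type*} (x : ℕ → α) (n : ℕ) :
    (initSeg x (n + 1)).dropLast = initSeg x n := by
  simp [initSeg, List.range_succ]

theorem take_initSeg {α : Type*} (x : ℕ → α) {m n : ℕ} (h : m ≤ n) :
    (initSeg x n).take m = initSeg x m := by
  simp [initSeg, ← List.map_take, List.take_range, h]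

theorem initSeg_eq_iff {α : Type*} {x y : ℕ → α} {n : ℕ} :
    initSeg x n = initSeg y n ↔ ∀ i < n, x i = y i := by
  simp [initSeg]

theorem initSeg_eq_ofFn {α : Type*} (x : ℕ → α) (n : ℕ) :
    initSeg x n = List.ofFn fun i : Fin n => x i :=
  List.ext_getElem (by simp) (by simp [initSeg])

/-- Sequences agreeing with `x` on longer and longer initial segments converge to `x`. -/
theorem tendsto_of_initSeg_eq {α : Type*} [TopologicalSpace α] {u : ℕ → ℕ → α} {x : ℕ → α}
    (h : ∀ n, initSeg (u n) n = initSeg x n) : Tendsto u atTop (𝓝 x) := by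
  refine tendsto_pi_nhds.2 fun i => tendsto_const_nhds.congr' ?_
  filter_upwards [eventually_gt_atTop i] with n hn
  exact (initSeg_eq_iff.1 (h n) i hn).symm

/-- Lists of increasing length, each extending the previous one by one entry, are the initial
segments of a sequence. -/
theorem exists_initSeg_eq {α : Type*} [Inhabited α] {s : ℕ → List α} {N : ℕ}
    (hlen : ∀ k, (s k).length = N + 1 + k) (hs : ∀ k, (s (k + 1)).dropLast = s k) :
    ∃ b : ℕ → α, ∀ k, s k = initSeg b (N + 1 + k) := by
  have hpre : ∀ k l, k ≤ l → s k <+: s l := by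
    intro k l hkl
    induction l, hkl using Nat.le_induction with
    | base => exact List.prefix_rfl
    | succ l _ ih => exact ih.trans (hs l ▸ List.dropLast_prefix _)
  have hlt : ∀ i, i < (s i).length := fun i => by rw [hlen]; omega
  refine ⟨fun i => (s i)[i]'(hlt i), fun k => List.ext_getElem (by simp [hlen]) ?_⟩
  intro i hi _
  simp only [initSeg, List.getElem_map, List.getElem_range]
  rcases le_total k i with h | h
  · exact (hpre k i h).getElem hi
  · exact ((hpre i k h).getElem (hlt i)).symm

/-- Vertices of the chain graphs: a level together with an integral chain of nodes. -/
abbrev ChainVertex : Type := ℕ × (List ℕ →₀ ℤ)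

/-- The edge relation, from a chain on level `n + 1` of the tree `T` with total degree `c`
to its projection on level `n`. -/
def ChainEdge (T : Set (List ℕ)) (c : ℤ) (u v : ChainVertex) : Prop :=
  u.1 = v.1 + 1 ∧ u.2.mapDomain List.dropLast = v.2 ∧ u.2.degree = c ∧
    u.2 ∈ Finsupp.supported ℤ ℤ {s | s.length = u.1 ∧ s ∈ T}

/-- An enumeration of the vertices of the chain graphs. -/
noncomputable def chainVertexEquiv : ℕ ≃ ChainVertex :=
  Classical.choice nonempty_equiv_of_countable

open Classical in
/-- The graph of chains of degree `c` of the tree `T`, coded on `ℕ`. -/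
noncomputable def chainGraph (T : Set (List ℕ)) (c : ℤ) (p : ℕ × ℕ) : Bool :=
  decide (ChainEdge T c (chainVertexEquiv p.1) (chainVertexEquiv p.2))

theorem chainGraph_eq_true_iff {T : Set (List ℕ)} {c : ℤ} {p : ℕ × ℕ} :
    chainGraph T c p = true ↔ ChainEdge T c (chainVertexEquiv p.1) (chainVertexEquiv p.2) :=
  @decide_eq_true_iff _ (Classical.propDecidable _)

/-- An infinite path through the chains of degree one yields a branch of the tree. -/
theorem exists_branch_of_chainEdge {T : Set (List ℕ)} (hT : ∀ s ∈ T, ∀ m, s.take m ∈ T)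
    {v : ℕ → ChainVertex} (hv : ∀ k, ChainEdge T 1 (v (k + 1)) (v k)) :
    ∃ b : ℕ → ℕ, ∀ n, initSeg b n ∈ T := by
  have hlevel : ∀ k, (v k).1 = (v 0).1 + k := by
    intro k
    induction k with
    | zero => rfl
    | succ k ih => rw [(hv k).1, ih, add_assoc]
  have hmem : ∀ k, ∀ s ∈ (v (k + 1)).2.support, s.length = (v (k + 1)).1 ∧ s ∈ T :=
    fun k s hs => (Finsupp.mem_supported ℤ _).1 (hv k).2.2.2 hs
  have hne : (v 1).2.support.Nonempty := by
    rw [Finsupp.support_nonempty_iff]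
    intro h
    simpa [h] using (hv 0).2.2.1
  have hstep : ∀ k, ∀ s ∈ (v (k + 1)).2.support,
      ∃ t ∈ (v (k + 2)).2.support, t.dropLast = s := by
    intro k s hs
    rw [← (hv (k + 1)).2.1] at hs
    exact Finset.mem_image.1 (Finsupp.mapDomain_support hs)
  choose! next hnext hdrop using hstep
  obtain ⟨s₀, hs₀⟩ := hne
  let s : ℕ → List ℕ := fun k => Nat.rec s₀ next k
  have hs : ∀ k, s k ∈ (v (k + 1)).2.support := by
    intro k
    induction k with
    | zero => exact hs₀
    | succ k ih => exact hnext k _ ih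
  obtain ⟨b, hb⟩ := exists_initSeg_eq (s := s) (N := (v 0).1)
    (fun k => by rw [(hmem k _ (hs k)).1, hlevel]; ring) fun k => hdrop k _ (hs k)
  refine ⟨b, fun n => ?_⟩
  rw [← take_initSeg b (show n ≤ (v 0).1 + 1 + n by omega), ← hb]
  exact hT _ (hmem n _ (hs n)).2 n

/-- The chains of degree zero and of degree one of a tree form isomorphic graphs exactly when the
tree has a branch. -/
theorem graphIso_chainGraph_iff {T : Set (List ℕ)} (hT : ∀ s ∈ T, ∀ m, s.take m ∈ T) :
    GraphIso (chainGraph T 0) (chainGraph T 1) ↔ ∃ b : ℕ → ℕ, ∀ n, initSeg b n ∈ T := by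
  constructor
  · rintro ⟨π, hπ⟩
    let a : ℕ → ℕ := fun k => π.symm (chainVertexEquiv.symm (k, 0))
    refine exists_branch_of_chainEdge hT (v := fun k => chainVertexEquiv (a k)) fun k => ?_
    refine chainGraph_eq_true_iff (p := (a (k + 1), a k)).1 ?_
    rw [← hπ, chainGraph_eq_true_iff]
    simp [a, ChainEdge]
  · rintro ⟨b, hb⟩
    let τ : ChainVertex ≃ ChainVertex := Equiv.prodShear (Equiv.refl ℕ)
      fun n => Equiv.subRight (Finsupp.single (initSeg b n) (1 : ℤ))
    have hτ : ∀ u v, ChainEdge T 0 (τ u) (τ v) ↔ ChainEdge T 1 u v := by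
      rintro ⟨m, d⟩ ⟨n, e⟩
      simp only [ChainEdge, τ, Equiv.prodShear_apply, Equiv.refl_apply, Equiv.subRight_apply]
      refine and_congr_right ?_
      rintro rfl
      have hsupp : Finsupp.single (initSeg b (n + 1)) (1 : ℤ) ∈
          Finsupp.supported ℤ ℤ {s | s.length = n + 1 ∧ s ∈ T} :=
        Finsupp.single_mem_supported ℤ _ ⟨length_initSeg b _, hb _⟩
      rw [Finsupp.mapDomain_sub, Finsupp.mapDomain_single, dropLast_initSeg_succ, sub_left_inj,
        map_sub, Finsupp.degree_single, sub_eq_zero, Submodule.sub_mem_iff_left _ hsupp]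
    refine ⟨(chainVertexEquiv.trans τ).trans chainVertexEquiv.symm, fun i j => ?_⟩
    rw [Bool.eq_iff_iff, chainGraph_eq_true_iff, chainGraph_eq_true_iff]
    simp [hτ]

/-- The tree of attempts to show that `z` belongs to the analytic set which it codes. -/
def diagTree (z : ℕ → Bool) : Set (List ℕ) :=
  {s | ∀ m ≤ s.length, z (Encodable.encode (initSeg z m, s.take m)) = true}

theorem take_mem_diagTree {z : ℕ → Bool} {s : List ℕ} (hs : s ∈ diagTree z) (m : ℕ) :
    s.take m ∈ diagTree z := by
  intro k hk
  rw [List.length_take, le_min_iff] at hk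
  rw [List.take_take, min_eq_left hk.1]
  exact hs k hk.2

theorem forall_initSeg_mem_diagTree {z : ℕ → Bool} {b : ℕ → ℕ} :
    (∀ n, initSeg b n ∈ diagTree z) ↔
      ∀ n, z (Encodable.encode (initSeg z n, initSeg b n)) = true := by
  constructor
  · intro h n
    simpa [take_initSeg] using h n n (by simp)
  · intro h n m hm
    rw [take_initSeg b (by simpa using hm)]
    exact h m

/-- Evaluation of a sequence at a measurably varying index of a countable type. -/
theorem Measurable.eval_countable {α ι β : Type*} [MeasurableSpace α] [MeasurableSpace β]
    [Countable ι] [MeasurableSpace ι] [MeasurableSingletonClass ι] {x : α → ι → β} {f : α → ι}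
    (hx : Measurable x) (hf : Measurable f) : Measurable fun a => x a (f a) :=
  (measurable_from_prod_countable_left (f := fun p : (ι → β) × ι => p.1 p.2)
    fun i => measurable_pi_apply i).comp (hx.prodMk hf)

theorem measurable_mem_diagTree (s : List ℕ) : Measurable fun z => s ∈ diagTree z := by
  refine Measurable.forall fun m => measurable_const.imp (Measurable.eq_const ?_ true)
  have hcode : Measurable fun z : ℕ → Bool => Encodable.encode (initSeg z m, s.take m) := by
    simp only [initSeg_eq_ofFn]
    exact (measurable_of_countable fun w : Fin m → Bool =>
      Encodable.encode (List.ofFn w, s.take m)).comp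
        (measurable_pi_lambda _ fun i => measurable_pi_apply (i : ℕ))
  exact measurable_id.eval_countable hcode

theorem measurable_chainGraph_diagTree (c : ℤ) : Measurable fun z => chainGraph (diagTree z) c := by
  refine measurable_pi_lambda _ fun p => measurable_to_bool ?_
  have hsupp : ∀ u : ChainVertex, Measurable fun z =>
      u.2 ∈ Finsupp.supported ℤ ℤ {s | s.length = u.1 ∧ s ∈ diagTree z} := fun u =>
    Measurable.forall fun s => measurable_const.imp <|
      measurable_const.and (measurable_mem_diagTree s)
  have hedge : Measurable fun z =>
      ChainEdge (diagTree z) c (chainVertexEquiv p.1) (chainVertexEquiv p.2) :=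
    measurable_const.and <| measurable_const.and <| measurable_const.and (hsupp _)
  simpa [Set.preimage, chainGraph_eq_true_iff] using hedge

open Classical in
/-- Every analytic set of binary sequences is coded by a binary sequence. -/
theorem MeasureTheory.AnalyticSet.exists_code {A : Set (ℕ → Bool)} (hA : AnalyticSet A) :
    ∃ c : ℕ → Bool, ∀ y, y ∈ A ↔
      ∃ b : ℕ → ℕ, ∀ n, c (Encodable.encode (initSeg y n, initSeg b n)) = true := by
  rw [AnalyticSet] at hA
  rcases hA with rfl | ⟨f, hf, rfl⟩
  · exact ⟨fun _ => false, by simp⟩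
  let C : Set (List Bool × List ℕ) := {q | ∃ b n, q = (initSeg (f b) n, initSeg b n)}
  refine ⟨fun k => decide (∃ q ∈ C, Encodable.encode q = k), fun y => ?_⟩
  simp only [decide_eq_true_eq, Encodable.encode_inj, exists_eq_right]
  constructor
  · rintro ⟨b, rfl⟩
    exact ⟨b, fun n => ⟨b, n, rfl⟩⟩
  · rintro ⟨b, hb⟩
    have hb' : ∀ n, ∃ b', initSeg (f b') n = initSeg y n ∧ initSeg b' n = initSeg b n := by
      intro n
      obtain ⟨b', m, h⟩ := hb n
      obtain ⟨h₁, h₂⟩ := Prod.mk.inj h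
      obtain rfl : n = m := by simpa using congrArg List.length h₁
      exact ⟨b', h₁.symm, h₂.symm⟩
    choose u hu hub using hb'
    exact ⟨b, tendsto_nhds_unique ((hf.tendsto b).comp (tendsto_of_initSeg_eq hub))
      (tendsto_of_initSeg_eq hu)⟩

theorem not_measurableSet_exists_branch_diagTree :
    ¬ MeasurableSet {z | ∃ b : ℕ → ℕ, ∀ n, initSeg b n ∈ diagTree z} := by
  intro h
  have : PolishSpace (ℕ → Bool) := { }
  obtain ⟨c, hc⟩ := h.compl.analyticSet.exists_code
  have := hc c
  simp only [← forall_initSeg_mem_diagTree, Set.mem_compl_iff, Set.mem_ofPred_eq] at this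
  exact not_iff_self this

theorem not_measurableSet_graphIso :
    ¬ MeasurableSet {p : ((ℕ × ℕ) → Bool) × ((ℕ × ℕ) → Bool) | GraphIso p.1 p.2} := by
  intro h
  refine not_measurableSet_exists_branch_diagTree ?_
  have := ((measurable_chainGraph_diagTree 0).prodMk (measurable_chainGraph_diagTree 1)) h
  simpa only [Set.preimage_ofPred_eq,
    graphIso_chainGraph_iff fun _ hs m => take_mem_diagTree hs m] using this

set_option synthInstance.maxSize 1000 in
theorem analyticSet_graphIso :
    AnalyticSet {p : ((ℕ × ℕ) → Bool) × ((ℕ × ℕ) → Bool) | GraphIso p.1 p.2} := by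
  let S : Set ((((ℕ × ℕ) → Bool) × ((ℕ × ℕ) → Bool)) × ((ℕ → ℕ) × (ℕ → ℕ))) :=
    {q | (∀ i, q.2.2 (q.2.1 i) = i) ∧ (∀ i, q.2.1 (q.2.2 i) = i) ∧
      ∀ i j, q.1.1 (q.2.1 i, q.2.1 j) = q.1.2 (i, j)}
  have hS : MeasurableSet S := by
    have hf : ∀ i, Measurable fun q : (((ℕ × ℕ) → Bool) × ((ℕ × ℕ) → Bool)) ×
        ((ℕ → ℕ) × (ℕ → ℕ)) => q.2.1 i := fun i => by fun_prop
    have hg : ∀ i, Measurable fun q : (((ℕ × ℕ) → Bool) × ((ℕ × ℕ) → Bool)) ×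
        ((ℕ → ℕ) × (ℕ → ℕ)) => q.2.2 i := fun i => by fun_prop
    refine Measurable.setOf (.and ?_ (.and ?_ ?_))
    · exact .forall fun i => (measurable_snd.snd.eval_countable (hf i)).eq_const i
    · exact .forall fun i => (measurable_snd.fst.eval_countable (hg i)).eq_const i
    · exact .forall fun i => .forall fun j => measurableSet_setOfPred.1 <|
        measurableSet_eq_fun (measurable_fst.fst.eval_countable ((hf i).prodMk (hf j)))
          (by fun_prop)
  have : PolishSpace ((((ℕ × ℕ) → Bool) × ((ℕ × ℕ) → Bool)) × ((ℕ → ℕ) × (ℕ → ℕ))) := { }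
  convert hS.analyticSet.image_of_continuous continuous_fst using 1
  ext p
  constructor
  · rintro ⟨π, hπ⟩
    exact ⟨(p, (π, π.symm)), ⟨π.symm_apply_apply, π.apply_symm_apply, hπ⟩, rfl⟩
  · rintro ⟨q, ⟨h₁, h₂, h₃⟩, rfl⟩
    exact ⟨⟨q.2.1, q.2.2, h₁, h₂⟩, h₃⟩

/-- Graph isomorphism is an analytic, non-Borel subset of the square of the Polish space
`(ℕ × ℕ) → Bool`. -/
theorem graphIso_analytic_not_borel :
    MeasureTheory.AnalyticSet
      {p : ((ℕ × ℕ) → Bool) × ((ℕ × ℕ) → Bool) | GraphIso p.1 p.2} ∧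
    ¬ MeasurableSet {p : ((ℕ × ℕ) → Bool) × ((ℕ × ℕ) → Bool) | GraphIso p.1 p.2} :=
  ⟨analyticSet_graphIso, not_measurableSet_graphIso⟩
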